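/- Evolution of the spatial Fisher information under the relaxation collision operator: if h : [0,∞) × 𝕋^d × ℝ^d → ℝ is smooth, bounded above and below by positive constants, has all partial derivatives bounded, and solves ∂_t h = λ(Πh − h) with λ > 0, then for all t ≥ 0: (d/dt) I^X(h_t) ≤ −λ I^{ΠX/X}(h_t) − λ ( I^X(h_t) − I^{ΠX}(h_t) ). -/

import Mathlib

/-!
The inequality is an equality, and it already holds pointwise. Write `P = Πh`. Inserting
`∂ₜh = λ(P - h)` and `∂ₜ∇h = λ(∇P - ∇h)` into `∂ₜ(|∇h|²/h)` gives
`-λ |∇P - P ∇h/h|²/P - λ (|∇h|²/h - |∇P|²/P)`. The first square is the integrand of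
`I^{ΠX/X}(h)`, because `∇(P/h) = (∇P - P ∇h/h)/h`, and `|∇P|²/P`, which depends on `x`
only, integrates to `I^{ΠX}(h)` because `ℳ` has mass one. Derivatives pass under the integral sign
because all integrands are polynomials in the bounded continuous functions `h`, `1/h` and their
derivatives. The equation enters only at the time `t` itself, so the two-sided derivative at
`t = 0` needs no equation at negative times.
-/

open MeasureTheory Real Filter

noncomputable section

/-- The standard Gaussian density `ℳ(v) = (2π)^{-d/2} exp(-|v|²/2)` on `ℝ^d`. -/
def gauss (d : ℕ) (v : Fin d → ℝ) : ℝ :=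
  (2 * Real.pi) ^ (-(d : ℝ) / 2) * Real.exp (-(∑ i, v i ^ 2) / 2)

/-- Fundamental domain `[0,1]^d` of the torus `𝕋^d`; the normalized Lebesgue measure on
the torus is the restriction of Lebesgue measure to this cube. -/
def cube (d : ℕ) : Set (Fin d → ℝ) := Set.Icc 0 1

/-- A function of `(x,v)` represents a function on `𝕋^d × ℝ^d` iff it is `ℤ^d`-periodic in `x`. -/
def IsPeriodic (d : ℕ) (f : (Fin d → ℝ) → (Fin d → ℝ) → ℝ) : Prop :=
  ∀ (x v : Fin d → ℝ) (k : Fin d → ℤ), f (x + fun i => (k i : ℝ)) v = f x v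

/-- The projection `Πf(x) = ∫ f(x,u) ℳ(u) du`. -/
def proj (d : ℕ) (f : (Fin d → ℝ) → (Fin d → ℝ) → ℝ) (x : Fin d → ℝ) : ℝ :=
  ∫ u, f x u * gauss d u

/-- Euclidean dot product on `ℝ^d`. -/
def dotp (d : ℕ) (a b : Fin d → ℝ) : ℝ := ∑ i, a i * b i

/-- Squared Euclidean norm on `ℝ^d`. -/
def nsq (d : ℕ) (a : Fin d → ℝ) : ℝ := ∑ i, a i ^ 2

/-- Gradient in the `x` variable. -/
def gradx (d : ℕ) (f : (Fin d → ℝ) → (Fin d → ℝ) → ℝ) (x v : Fin d → ℝ) : Fin d → ℝ :=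
  fun i => fderiv ℝ (fun y => f y v) x (Pi.single i 1)

/-- Gradient in the `v` variable. -/
def gradv (d : ℕ) (f : (Fin d → ℝ) → (Fin d → ℝ) → ℝ) (x v : Fin d → ℝ) : Fin d → ℝ :=
  fun i => fderiv ℝ (fun w => f x w) v (Pi.single i 1)

/-- Gradient of a function of `x` only. -/
def grad1 (d : ℕ) (g : (Fin d → ℝ) → ℝ) (x : Fin d → ℝ) : Fin d → ℝ :=
  fun i => fderiv ℝ g x (Pi.single i 1)

/-- Laplacian in the `v` variable. -/
def lapv (d : ℕ) (f : (Fin d → ℝ) → (Fin d → ℝ) → ℝ) (x v : Fin d → ℝ) : ℝ :=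
  ∑ i, fderiv ℝ (fun w => gradv d f x w i) v (Pi.single i 1)

/-- Integral against `μ = ℳ(v) dv dx` on `𝕋^d × ℝ^d`. -/
def intMu (d : ℕ) (F : (Fin d → ℝ) → (Fin d → ℝ) → ℝ) : ℝ :=
  ∫ x in cube d, ∫ v, F x v * gauss d v

/-- `I^X(h) = ∫ |∇_x h|²/h dμ`. -/
def IX (d : ℕ) (h : (Fin d → ℝ) → (Fin d → ℝ) → ℝ) : ℝ :=
  intMu d fun x v => nsq d (gradx d h x v) / h x v

/-- `I^V(h) = ∫ |∇_v h|²/h dμ`. -/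
def IV (d : ℕ) (h : (Fin d → ℝ) → (Fin d → ℝ) → ℝ) : ℝ :=
  intMu d fun x v => nsq d (gradv d h x v) / h x v

/-- `I^M(h) = ∫ (∇_x h · ∇_v h)/h dμ`. -/
def IM (d : ℕ) (h : (Fin d → ℝ) → (Fin d → ℝ) → ℝ) : ℝ :=
  intMu d fun x v => dotp d (gradx d h x v) (gradv d h x v) / h x v

/-- The full Fisher information `I(h) = ∫ |∇_{x,v} h|²/h dμ`. -/
def Ifull (d : ℕ) (h : (Fin d → ℝ) → (Fin d → ℝ) → ℝ) : ℝ :=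
  intMu d fun x v => (nsq d (gradx d h x v) + nsq d (gradv d h x v)) / h x v

/-- `I^{ΠX}(h) = ∫_{𝕋^d} |∇_x Πh|²/Πh dx`. -/
def IPiX (d : ℕ) (h : (Fin d → ℝ) → (Fin d → ℝ) → ℝ) : ℝ :=
  ∫ x in cube d, nsq d (grad1 d (proj d h) x) / proj d h x

/-- `I^{ΠX/X}(h) = ∫ (|∇_x(Πh/h)|²/(Πh/h)) h dμ`. -/
def IPiXX (d : ℕ) (h : (Fin d → ℝ) → (Fin d → ℝ) → ℝ) : ℝ :=
  intMu d fun x v =>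
    nsq d (gradx d (fun y w => proj d h y / h y w) x v) / (proj d h x / h x v) * h x v

/-- `I^{ΠV/V}(h) = ∫ (|∇_v h|²/h)(Πh/h) dμ`. -/
def IPiVV (d : ℕ) (h : (Fin d → ℝ) → (Fin d → ℝ) → ℝ) : ℝ :=
  intMu d fun x v => nsq d (gradv d h x v) / h x v * (proj d h x / h x v)

/-- The relative entropy `H(h) = ∫ h log h dμ`. -/
def Hent (d : ℕ) (h : (Fin d → ℝ) → (Fin d → ℝ) → ℝ) : ℝ :=
  intMu d fun x v => h x v * Real.log (h x v)

/-- The projected entropy `H_Π(h) = ∫_{𝕋^d} Πh log Πh dx`. -/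
def HPi (d : ℕ) (h : (Fin d → ℝ) → (Fin d → ℝ) → ℝ) : ℝ :=
  ∫ x in cube d, proj d h x * Real.log (proj d h x)

/-- The local average speed `U(x) = ∫ v h(x,v) ℳ(v) dv`. -/
def Uvec (d : ℕ) (h : (Fin d → ℝ) → (Fin d → ℝ) → ℝ) (x : Fin d → ℝ) : Fin d → ℝ :=
  fun i => ∫ v, v i * h x v * gauss d v

/-- The divergence `∇_x · U`. -/
def divU (d : ℕ) (h : (Fin d → ℝ) → (Fin d → ℝ) → ℝ) (x : Fin d → ℝ) : ℝ :=
  ∑ i, fderiv ℝ (fun y => Uvec d h y i) x (Pi.single i 1)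

/-- The `p`-entropy `H^{(p)}(h) = ∫ (h^p - h)/(p(p-1)) dμ`. -/
def Hp (d : ℕ) (p : ℝ) (h : (Fin d → ℝ) → (Fin d → ℝ) → ℝ) : ℝ :=
  intMu d fun x v => (h x v ^ p - h x v) / (p * (p - 1))

/-- The projected `p`-entropy `H_Π^{(p)}(h) = ∫_{𝕋^d} ((Πh)^p - Πh)/(p(p-1)) dx`. -/
def HpPi (d : ℕ) (p : ℝ) (h : (Fin d → ℝ) → (Fin d → ℝ) → ℝ) : ℝ :=
  ∫ x in cube d, ((proj d h x) ^ p - proj d h x) / (p * (p - 1))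

/-- The `p`-Fisher information `I^{(p)}(h) = ∫ h^{p-2} |∇_{x,v} h|² dμ`. -/
def Ipfull (d : ℕ) (p : ℝ) (h : (Fin d → ℝ) → (Fin d → ℝ) → ℝ) : ℝ :=
  intMu d fun x v => h x v ^ (p - 2) * (nsq d (gradx d h x v) + nsq d (gradv d h x v))

/-- The spatial `p`-Fisher information `∫ h^{p-2} |∇_x h|² dμ`. -/
def IpX (d : ℕ) (p : ℝ) (h : (Fin d → ℝ) → (Fin d → ℝ) → ℝ) : ℝ :=
  intMu d fun x v => h x v ^ (p - 2) * nsq d (gradx d h x v)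

/-- Regularity of a time-dependent `h`: smooth, periodic in `x`, bounded above and below by
positive constants, with all partial derivatives bounded. -/
def Regular (d : ℕ) (h : ℝ → (Fin d → ℝ) → (Fin d → ℝ) → ℝ) : Prop :=
  ContDiff ℝ (⊤ : ℕ∞) (fun q : ℝ × (Fin d → ℝ) × (Fin d → ℝ) => h q.1 q.2.1 q.2.2) ∧
  (∀ t, IsPeriodic d (h t)) ∧
  (∃ c C : ℝ, 0 < c ∧ ∀ t x v, c ≤ h t x v ∧ h t x v ≤ C) ∧
  (∀ n : ℕ, ∃ C : ℝ, ∀ q : ℝ × (Fin d → ℝ) × (Fin d → ℝ),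
    ‖iteratedFDeriv ℝ n (fun r : ℝ × (Fin d → ℝ) × (Fin d → ℝ) => h r.1 r.2.1 r.2.2) q‖ ≤ C)

/-- Regularity of a time-independent `h`: smooth, periodic in `x`, bounded above and below by
positive constants, with bounded gradient. -/
def RegularStatic (d : ℕ) (h : (Fin d → ℝ) → (Fin d → ℝ) → ℝ) : Prop :=
  ContDiff ℝ (⊤ : ℕ∞) (fun q : (Fin d → ℝ) × (Fin d → ℝ) => h q.1 q.2) ∧
  IsPeriodic d h ∧
  (∃ c C : ℝ, 0 < c ∧ ∀ x v, c ≤ h x v ∧ h x v ≤ C) ∧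
  (∃ C : ℝ, ∀ q : (Fin d → ℝ) × (Fin d → ℝ),
    ‖fderiv ℝ (fun r : (Fin d → ℝ) × (Fin d → ℝ) => h r.1 r.2) q‖ ≤ C)

/-- `h` solves the linear relaxation Boltzmann equation `∂_t h + v·∇_x h = λ(Πh - h)` for `t ≥ 0`. -/
def SolvesLRB (d : ℕ) (lam : ℝ) (h : ℝ → (Fin d → ℝ) → (Fin d → ℝ) → ℝ) : Prop :=
  ∀ t x v, 0 ≤ t →
    deriv (fun s => h s x v) t + dotp d v (gradx d (h t) x v)
      = lam * (proj d (h t) x - h t x v)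

/-- `h` solves the free transport equation `∂_t h + v·∇_x h = 0` for `t ≥ 0`. -/
def SolvesTransport (d : ℕ) (h : ℝ → (Fin d → ℝ) → (Fin d → ℝ) → ℝ) : Prop :=
  ∀ t x v, 0 ≤ t →
    deriv (fun s => h s x v) t + dotp d v (gradx d (h t) x v) = 0

/-- `h` solves the pure relaxation equation `∂_t h = λ(Πh - h)` for `t ≥ 0`. -/
def SolvesCollision (d : ℕ) (lam : ℝ) (h : ℝ → (Fin d → ℝ) → (Fin d → ℝ) → ℝ) : Prop :=
  ∀ t x v, 0 ≤ t →
    deriv (fun s => h s x v) t = lam * (proj d (h t) x - h t x v)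

/-- `h` solves the kinetic Fokker–Planck equation `∂_t h + v·∇_x h = Δ_v h - v·∇_v h` for `t ≥ 0`. -/
def SolvesKFP (d : ℕ) (h : ℝ → (Fin d → ℝ) → (Fin d → ℝ) → ℝ) : Prop :=
  ∀ t x v, 0 ≤ t →
    deriv (fun s => h s x v) t + dotp d v (gradx d (h t) x v)
      = lapv d (h t) x v - dotp d v (gradv d (h t) x v)

open Set ProbabilityTheory
open scoped BoundedContinuousFunction

/-! ### Bounded continuous functions -/

section BoundedContinuous

variable {α : Type*} [TopologicalSpace α]

lemma exists_boundedContinuous_inv {c : ℝ} (hc : 0 < c) (f : α →ᵇ ℝ) (hf : ∀ a, c ≤ f a) :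
    ∃ g : α →ᵇ ℝ, ∀ a, g a = (f a)⁻¹ := by
  have hpos : ∀ a, 0 < f a := fun a => hc.trans_le (hf a)
  refine ⟨.ofNormedAddCommGroup (fun a => (f a)⁻¹)
    (f.continuous.inv₀ fun a => (hpos a).ne') c⁻¹ fun a => ?_, fun _ => rfl⟩
  rw [norm_inv, Real.norm_of_nonneg (hpos a).le]
  exact inv_anti₀ hc (hf a)

/-- The function `a ↦ F (t, a)` at a fixed time `t`. -/
def atTime {G : Type*} [PseudoMetricSpace G] (t : ℝ) (F : ℝ × α →ᵇ G) : α →ᵇ G :=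
  F.compContinuous ⟨(t, ·), by fun_prop⟩

lemma atTime_apply {G : Type*} [PseudoMetricSpace G] (t : ℝ) (F : ℝ × α →ᵇ G) (a : α) :
    atTime t F a = F (t, a) := rfl

variable {E G : Type*} [NormedAddCommGroup E] [NormedSpace ℝ E]
  [NormedAddCommGroup G] [NormedSpace ℝ G]

/-- The bounded continuous function `a ↦ F a e` given by a field `F` of linear maps; for the
derivative of a function this is the directional derivative along `e`. -/
def evalAt (F : α →ᵇ E →L[ℝ] G) (e : E) : α →ᵇ G :=
  (ContinuousLinearMap.apply ℝ G e).compLeftContinuousBounded α F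

lemma evalAt_apply (F : α →ᵇ E →L[ℝ] G) (e : E) (a : α) : evalAt F e a = F a e := rfl

lemma exists_boundedContinuous_fderiv {f : E → G} (hf : ContDiff ℝ 1 f) {C : ℝ}
    (hC : ∀ q, ‖fderiv ℝ f q‖ ≤ C) :
    ∃ f' : E →ᵇ E →L[ℝ] G, ∀ q, HasFDerivAt f (f' q) q :=
  ⟨.ofNormedAddCommGroup (fderiv ℝ f) (hf.continuous_fderiv one_ne_zero) C hC,
    fun q => (hf.differentiable one_ne_zero q).hasFDerivAt⟩

lemma exists_boundedContinuous_fderiv_fderiv {f : E → G} (hf : ContDiff ℝ 2 f)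
    (hbdd : ∀ n ≤ 2, ∃ C, ∀ q, ‖iteratedFDeriv ℝ n f q‖ ≤ C) :
    ∃ (F : E →ᵇ G) (F' : E →ᵇ E →L[ℝ] G) (F'' : E →ᵇ E →L[ℝ] E →L[ℝ] G),
      ⇑F = f ∧ (∀ q, HasFDerivAt F (F' q) q) ∧ ∀ q, HasFDerivAt F' (F'' q) q := by
  obtain ⟨C₀, hC₀⟩ := hbdd 0 (by norm_num)
  obtain ⟨C₁, hC₁⟩ := hbdd 1 (by norm_num)
  obtain ⟨C₂, hC₂⟩ := hbdd 2 le_rfl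
  obtain ⟨F', hF'⟩ := exists_boundedContinuous_fderiv (hf.of_le one_le_two) (C := C₁)
    fun q => by rw [← norm_iteratedFDeriv_one]; exact hC₁ q
  have hfderiv : fderiv ℝ f = F' := funext fun q => (hF' q).fderiv
  obtain ⟨F'', hF''⟩ := exists_boundedContinuous_fderiv (f := F') (C := C₂)
    (hfderiv ▸ hf.fderiv_right (m := 1) (by norm_num)) fun q => by
      rw [← hfderiv, ← norm_iteratedFDeriv_one, norm_iteratedFDeriv_fderiv]
      exact hC₂ q
  exact ⟨.ofNormedAddCommGroup f hf.continuous C₀ fun q => by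
    simpa only [norm_iteratedFDeriv_zero] using hC₀ q, F', F'', rfl, hF', hF''⟩

end BoundedContinuous

/-! ### Integrals depending on a parameter -/

section Marginal

variable {E β G : Type*} [TopologicalSpace β] [MeasurableSpace β]
  [OpensMeasurableSpace β] [NormedAddCommGroup G]

section Continuous

variable [TopologicalSpace E]

lemma integrable_boundedContinuous_snd [SecondCountableTopologyEither β G]
    (ν : Measure β) [IsFiniteMeasure ν] (F : E × β →ᵇ G) (e : E) :
    Integrable (fun b => F (e, b)) ν :=
  .of_bound (F.continuous.comp (by fun_prop)).aestronglyMeasurable ‖F‖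
    (.of_forall fun _ => F.norm_coe_le_norm _)

variable [NormedSpace ℝ G] [FirstCountableTopology E]

/-- The marginal `e ↦ ∫ F (e, b) dν(b)` of a bounded continuous function, again bounded and
continuous. -/
def marginal [SecondCountableTopologyEither β G]
    (ν : Measure β) [IsFiniteMeasure ν] (F : E × β →ᵇ G) : E →ᵇ G :=
  .ofNormedAddCommGroup (fun e => ∫ b, F (e, b) ∂ν)
    (continuous_of_dominated
      (fun e => (integrable_boundedContinuous_snd ν F e).aestronglyMeasurable)
      (fun _ => .of_forall fun _ => F.norm_coe_le_norm _) (integrable_const ‖F‖)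
      (.of_forall fun _ => F.continuous.comp (by fun_prop)))
    (‖F‖ * ν.real univ)
    fun _ => norm_integral_le_of_norm_le_const (.of_forall fun _ => F.norm_coe_le_norm _)

lemma marginal_apply [SecondCountableTopologyEither β G] (ν : Measure β) [IsFiniteMeasure ν]
    (F : E × β →ᵇ G) (e : E) : marginal ν F e = ∫ b, F (e, b) ∂ν := rfl

lemma le_marginal (ν : Measure β) [IsProbabilityMeasure ν]
    {F : E × β →ᵇ ℝ} {c : ℝ} (hF : ∀ p, c ≤ F p) (e : E) : c ≤ marginal ν F e :=
  calc c = ∫ _, c ∂ν := by simp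
    _ ≤ marginal ν F e := integral_mono (integrable_const c)
      (integrable_boundedContinuous_snd ν F e) fun b => hF (e, b)

end Continuous

variable [NormedSpace ℝ G] [SecondCountableTopology β] (ν : Measure β) [IsFiniteMeasure ν]

lemma hasFDerivAt_marginal [NormedAddCommGroup E] [NormedSpace ℝ E]
    {F : E × β →ᵇ G} {F' : E × β →ᵇ E →L[ℝ] G}
    (hF : ∀ e b, HasFDerivAt (fun e' => F (e', b)) (F' (e, b)) e) (e : E) :
    HasFDerivAt (marginal ν F) (marginal ν F' e) e :=
  hasFDerivAt_integral_of_dominated_of_fderiv_le (F' := fun e b => F' (e, b)) Filter.univ_mem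
    (.of_forall fun e => (integrable_boundedContinuous_snd ν F e).aestronglyMeasurable)
    (integrable_boundedContinuous_snd ν F e)
    (integrable_boundedContinuous_snd ν F' e).aestronglyMeasurable
    (.of_forall fun _ _ _ => F'.norm_coe_le_norm _) (integrable_const ‖F'‖)
    (.of_forall fun b e _ => hF e b)

lemma hasDerivAt_marginal {F F' : ℝ × β →ᵇ G}
    (hF : ∀ t b, HasDerivAt (fun s => F (s, b)) (F' (t, b)) t) (t : ℝ) :
    HasDerivAt (marginal ν F) (marginal ν F' t) t :=
  (hasDerivAt_integral_of_dominated_loc_of_deriv_le Filter.univ_mem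
    (.of_forall fun s => (integrable_boundedContinuous_snd ν F s).aestronglyMeasurable)
    (integrable_boundedContinuous_snd ν F t)
    (integrable_boundedContinuous_snd ν F' t).aestronglyMeasurable
    (.of_forall fun _ _ _ => F'.norm_coe_le_norm _) (integrable_const ‖F'‖)
    (.of_forall fun b s _ => hF s b)).2

end Marginal

/-! ### The Fisher information density `|g|² / f` -/

section FisherDensity

variable {ι : Type*} [Fintype ι]

lemma hasDerivAt_sum_sq_div {g : ι → ℝ → ℝ} {f : ℝ → ℝ} {g' : ι → ℝ} {f' t : ℝ}
    (hg : ∀ i, HasDerivAt (g i) (g' i) t) (hf : HasDerivAt f f' t) (ht : f t ≠ 0) :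
    HasDerivAt (fun s => (∑ i, g i s ^ 2) / f s)
      ((∑ i, 2 * g i t * g' i) / f t - (∑ i, g i t ^ 2) * f' / f t ^ 2) t := by
  have hsum : HasDerivAt (fun s => ∑ i, g i s ^ 2) (∑ i, 2 * g i t * g' i) t :=
    .fun_sum fun i _ => by simpa using (hg i).fun_pow 2
  refine (hsum.fun_div hf ht).congr_deriv ?_
  field_simp

lemma sum_sq_div_relaxation (g p : ι → ℝ) {f P : ℝ} (lam : ℝ) (hf : f ≠ 0) (hP : P ≠ 0) :
    (∑ i, 2 * g i * (lam * (p i - g i))) / f - (∑ i, g i ^ 2) * (lam * (P - f)) / f ^ 2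
      = -lam * ((∑ i, (p i - P * g i / f) ^ 2) / P)
        - lam * ((∑ i, g i ^ 2) / f - (∑ i, p i ^ 2) / P) := by
  simp only [Finset.sum_div, Finset.sum_mul, Finset.mul_sum, ← Finset.sum_sub_distrib]
  refine Finset.sum_congr rfl fun i _ => ?_
  field_simp
  ring

variable {α : Type*} [TopologicalSpace α] [MeasurableSpace α] [OpensMeasurableSpace α]
  (μ : Measure α) [IsFiniteMeasure μ] {c : ℝ}

lemma integrable_sum_sq_div (g : ι → α →ᵇ ℝ) {f : α →ᵇ ℝ} (hc : 0 < c) (hcf : ∀ a, c ≤ f a) :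
    Integrable (fun a => (∑ i, g i a ^ 2) / f a) μ := by
  obtain ⟨z, hz⟩ := exists_boundedContinuous_inv hc f hcf
  refine (((∑ i, g i ^ 2) * z).integrable μ).congr (.of_forall fun a => ?_)
  simp [hz, div_eq_mul_inv]

lemma integrable_sum_sq_sub_div (g p : ι → α →ᵇ ℝ) {f P : α →ᵇ ℝ} (hc : 0 < c)
    (hcf : ∀ a, c ≤ f a) (hcP : ∀ a, c ≤ P a) :
    Integrable (fun a => (∑ i, (p i a - P a * g i a / f a) ^ 2) / P a) μ := by
  obtain ⟨z, hz⟩ := exists_boundedContinuous_inv hc f hcf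
  refine (integrable_sum_sq_div μ (fun i => p i - P * g i * z) hc hcP).congr
    (.of_forall fun a => ?_)
  simp [hz, div_eq_mul_inv]

lemma integral_sum_sq_div_relaxation (g p : ι → α →ᵇ ℝ) {f P : α →ᵇ ℝ} (hc : 0 < c)
    (hcf : ∀ a, c ≤ f a) (hcP : ∀ a, c ≤ P a) (lam : ℝ) :
    ∫ a, ((∑ i, 2 * g i a * (lam * (p i a - g i a))) / f a
        - (∑ i, g i a ^ 2) * (lam * (P a - f a)) / f a ^ 2) ∂μ
      = -lam * ∫ a, (∑ i, (p i a - P a * g i a / f a) ^ 2) / P a ∂μ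
        - lam * (∫ a, (∑ i, g i a ^ 2) / f a ∂μ - ∫ a, (∑ i, p i a ^ 2) / P a ∂μ) := by
  have hg := integrable_sum_sq_div μ g hc hcf
  have hp := integrable_sum_sq_div μ p hc hcP
  have hgp : Integrable (fun a => (∑ i, g i a ^ 2) / f a - (∑ i, p i a ^ 2) / P a) μ := hg.sub hp
  rw [← integral_sub hg hp, ← integral_const_mul, ← integral_const_mul,
    ← integral_sub ((integrable_sum_sq_sub_div μ g p hc hcf hcP).const_mul _) (hgp.const_mul _)]
  exact integral_congr_ae (.of_forall fun a => sum_sq_div_relaxation _ _ lam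
    (hc.trans_le (hcf a)).ne' (hc.trans_le (hcP a)).ne')

lemma hasDerivAt_integral_sum_sq_div [SecondCountableTopology α]
    {g g' : ι → ℝ × α →ᵇ ℝ} {f f' : ℝ × α →ᵇ ℝ} (hc : 0 < c) (hcf : ∀ q, c ≤ f q)
    (hg : ∀ i t a, HasDerivAt (fun s => g i (s, a)) (g' i (t, a)) t)
    (hf : ∀ t a, HasDerivAt (fun s => f (s, a)) (f' (t, a)) t) (t : ℝ) :
    HasDerivAt (fun s => ∫ a, (∑ i, g i (s, a) ^ 2) / f (s, a) ∂μ)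
      (∫ a, ((∑ i, 2 * g i (t, a) * g' i (t, a)) / f (t, a)
        - (∑ i, g i (t, a) ^ 2) * f' (t, a) / f (t, a) ^ 2) ∂μ) t := by
  obtain ⟨z, hz⟩ := exists_boundedContinuous_inv hc f hcf
  let F : ℝ × α →ᵇ ℝ := (∑ i, g i ^ 2) * z
  let F' : ℝ × α →ᵇ ℝ := (∑ i, 2 * g i * g' i) * z - (∑ i, g i ^ 2) * f' * z ^ 2
  have hF : ∀ q, F q = (∑ i, g i q ^ 2) / f q := fun q => by
    simp [F, hz, div_eq_mul_inv]
  have hF' : ∀ q, F' q = (∑ i, 2 * g i q * g' i q) / f q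
      - (∑ i, g i q ^ 2) * f' q / f q ^ 2 := fun q => by
    simp [F', hz, div_eq_mul_inv]
  have hderiv : ∀ t a, HasDerivAt (fun s => F (s, a)) (F' (t, a)) t := fun t a => by
    simp only [hF, hF']
    exact hasDerivAt_sum_sq_div (fun i => hg i t a) (hf t a) (hc.trans_le (hcf _)).ne'
  have hint := hasDerivAt_marginal μ hderiv t
  rw [marginal_apply, funext (marginal_apply μ F)] at hint
  simpa only [hF, hF'] using hint

end FisherDensity

/-! ### The Gaussian measure and the phase space -/

section Gaussian

lemma gauss_eq_prod_gaussianPDFReal (d : ℕ) (v : Fin d → ℝ) :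
    gauss d v = ∏ i, gaussianPDFReal 0 1 (v i) := by
  have hpow : ((√(2 * π))⁻¹) ^ d = (2 * π) ^ (-(d : ℝ) / 2) := by
    rw [sqrt_eq_rpow, ← rpow_neg (by positivity), ← rpow_natCast, ← rpow_mul (by positivity)]
    ring_nf
  simp only [gauss, gaussianPDFReal, NNReal.coe_one, mul_one, sub_zero, Finset.prod_mul_distrib,
    Finset.prod_const, Finset.card_univ, Fintype.card_fin, hpow, ← exp_sum, ← Finset.sum_div,
    Finset.sum_neg_distrib]

lemma gauss_nonneg (d : ℕ) (v : Fin d → ℝ) : 0 ≤ gauss d v := by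
  unfold gauss
  positivity

lemma measurable_gauss (d : ℕ) : Measurable (gauss d) := by
  unfold gauss
  fun_prop

/-- The probability measure `ℳ(v) dv` on `ℝ^d`. -/
def gaussMeasure (d : ℕ) : Measure (Fin d → ℝ) :=
  volume.withDensity fun v => ENNReal.ofReal (gauss d v)

instance isProbabilityMeasure_gaussMeasure (d : ℕ) : IsProbabilityMeasure (gaussMeasure d) := by
  have hint : Integrable (gauss d) := by
    rw [funext (gauss_eq_prod_gaussianPDFReal d)]
    exact .fintype_prod fun _ => integrable_gaussianPDFReal 0 1
  have hone : ∫ v, gauss d v = 1 := by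
    simp_rw [gauss_eq_prod_gaussianPDFReal]
    rw [integral_fintype_prod_volume_eq_prod fun _ => gaussianPDFReal 0 1]
    simp [integral_gaussianPDFReal_eq_one]
  constructor
  rw [gaussMeasure, withDensity_apply _ .univ, Measure.restrict_univ,
    ← ofReal_integral_eq_lintegral_ofReal hint (.of_forall (gauss_nonneg d)), hone,
    ENNReal.ofReal_one]

lemma integral_mul_gauss (d : ℕ) (g : (Fin d → ℝ) → ℝ) :
    ∫ v, g v * gauss d v = ∫ v, g v ∂gaussMeasure d := by
  rw [gaussMeasure, integral_withDensity_eq_integral_toReal_smul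
    (measurable_gauss d).ennreal_ofReal (.of_forall fun _ => ENNReal.ofReal_lt_top)]
  simp only [ENNReal.toReal_ofReal (gauss_nonneg d _), smul_eq_mul, mul_comm]

/-- The space `ℝ^d × ℝ^d` of positions and velocities `(x, v)`. -/
abbrev Phase (d : ℕ) : Type := (Fin d → ℝ) × (Fin d → ℝ)

/-- The measure `μ = ℳ(v) dv dx`, carried by the fundamental domain `[0,1]^d × ℝ^d`. -/
def phaseMeasure (d : ℕ) : Measure (Phase d) :=
  (volume.restrict (cube d)).prod (gaussMeasure d)

instance isFiniteMeasure_restrict_cube (d : ℕ) :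
    IsFiniteMeasure (volume.restrict (cube d)) :=
  isFiniteMeasure_restrict.2 isCompact_Icc.measure_lt_top.ne

instance isFiniteMeasure_phaseMeasure (d : ℕ) : IsFiniteMeasure (phaseMeasure d) := by
  unfold phaseMeasure
  infer_instance

lemma intMu_eq_integral {d : ℕ} {F : (Fin d → ℝ) → (Fin d → ℝ) → ℝ}
    (hF : Integrable (fun p : Phase d => F p.1 p.2) (phaseMeasure d)) :
    intMu d F = ∫ p, F p.1 p.2 ∂phaseMeasure d := by
  simp_rw [intMu, integral_mul_gauss]
  exact (integral_prod _ hF).symm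

lemma integral_cube_eq_integral_phaseMeasure {d : ℕ} (g : (Fin d → ℝ) → ℝ) :
    ∫ x in cube d, g x = ∫ p, g p.1 ∂phaseMeasure d := by
  simp [phaseMeasure, integral_fun_fst]

lemma proj_eq_marginal {d : ℕ} (f : Phase d →ᵇ ℝ) :
    proj d (fun x v => f (x, v)) = marginal (gaussMeasure d) f :=
  funext fun x => integral_mul_gauss d fun v => f (x, v)

end Gaussian

/-! ### Fisher informations of a function with bounded spatial gradient -/

section Static

variable {d : ℕ}

lemma gradx_apply {f : (Fin d → ℝ) → (Fin d → ℝ) → ℝ} {x v : Fin d → ℝ}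
    {L : (Fin d → ℝ) →L[ℝ] ℝ} (hf : HasFDerivAt (fun y => f y v) L x) (i : Fin d) :
    gradx d f x v i = L (Pi.single i 1) := by
  rw [gradx, hf.fderiv]

lemma gradx_div {P : (Fin d → ℝ) → ℝ} {f : (Fin d → ℝ) → (Fin d → ℝ) → ℝ} {x v : Fin d → ℝ}
    {L M : (Fin d → ℝ) →L[ℝ] ℝ} (hP : HasFDerivAt P M x)
    (hf : HasFDerivAt (fun y => f y v) L x) (hfx : f x v ≠ 0) (i : Fin d) :
    gradx d (fun y w => P y / f y w) x v i
      = (M (Pi.single i 1) - P x * L (Pi.single i 1) / f x v) / f x v := by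
  have hinv : HasFDerivAt (fun y => (f y v)⁻¹) (-(f x v ^ 2)⁻¹ • L) x :=
    (hasDerivAt_inv hfx).comp_hasFDerivAt x hf
  simp only [div_eq_mul_inv]
  rw [gradx_apply (hP.fun_mul hinv)]
  simp only [add_apply, smul_apply, smul_eq_mul]
  field_simp
  ring

variable {f : Phase d →ᵇ ℝ} {f' : Phase d →ᵇ (Fin d → ℝ) →L[ℝ] ℝ} {c : ℝ}

lemma grad1_marginal (hf : ∀ x v, HasFDerivAt (fun y => f (y, v)) (f' (x, v)) x)
    (x : Fin d → ℝ) (i : Fin d) :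
    grad1 d (marginal (gaussMeasure d) f) x i
      = marginal (gaussMeasure d) f' x (Pi.single i 1) := by
  rw [grad1, (hasFDerivAt_marginal _ hf x).fderiv]

lemma IX_eq_integral (hc : 0 < c) (hcf : ∀ p, c ≤ f p)
    (hf : ∀ x v, HasFDerivAt (fun y => f (y, v)) (f' (x, v)) x) :
    IX d (fun x v => f (x, v))
      = ∫ p, (∑ i, f' p (Pi.single i 1) ^ 2) / f p ∂phaseMeasure d := by
  have hgrad : ∀ x v, nsq d (gradx d (fun x v => f (x, v)) x v)
      = ∑ i, f' (x, v) (Pi.single i 1) ^ 2 := fun x v => by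
    simp only [nsq, gradx_apply (f := fun x v => f (x, v)) (hf x v)]
  simp only [IX, hgrad]
  exact intMu_eq_integral (F := fun x v => (∑ i, f' (x, v) (Pi.single i 1) ^ 2) / f (x, v))
    (integrable_sum_sq_div _ (fun i => evalAt f' (Pi.single i 1)) hc hcf)

lemma IPiX_eq_integral (hf : ∀ x v, HasFDerivAt (fun y => f (y, v)) (f' (x, v)) x) :
    IPiX d (fun x v => f (x, v))
      = ∫ p, (∑ i, marginal (gaussMeasure d) f' p.1 (Pi.single i 1) ^ 2)
          / marginal (gaussMeasure d) f p.1 ∂phaseMeasure d := by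
  simp only [IPiX, nsq, proj_eq_marginal, grad1_marginal hf]
  exact integral_cube_eq_integral_phaseMeasure fun x =>
    (∑ i, marginal (gaussMeasure d) f' x (Pi.single i 1) ^ 2) / marginal (gaussMeasure d) f x

lemma IPiXX_eq_integral (hc : 0 < c) (hcf : ∀ p, c ≤ f p)
    (hf : ∀ x v, HasFDerivAt (fun y => f (y, v)) (f' (x, v)) x) :
    IPiXX d (fun x v => f (x, v))
      = ∫ p, (∑ i, (marginal (gaussMeasure d) f' p.1 (Pi.single i 1)
          - marginal (gaussMeasure d) f p.1 * f' p (Pi.single i 1) / f p) ^ 2)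
          / marginal (gaussMeasure d) f p.1 ∂phaseMeasure d := by
  let P := marginal (gaussMeasure d) f
  let P' := marginal (gaussMeasure d) f'
  have hcP : ∀ x, c ≤ P x := le_marginal _ hcf
  have hdensity : ∀ x v,
      nsq d (gradx d (fun y w => proj d (fun x v => f (x, v)) y / f (y, w)) x v)
          / (proj d (fun x v => f (x, v)) x / f (x, v)) * f (x, v)
        = (∑ i, (P' x (Pi.single i 1) - P x * f' (x, v) (Pi.single i 1) / f (x, v)) ^ 2)
          / P x := fun x v => by
    have hfx : f (x, v) ≠ 0 := (hc.trans_le (hcf _)).ne'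
    have hPx : P x ≠ 0 := (hc.trans_le (hcP x)).ne'
    have hproj : proj d (fun x v => f (x, v)) = P := proj_eq_marginal f
    have hP : HasFDerivAt P (P' x) x := hasFDerivAt_marginal _ hf x
    have hgrad := gradx_div (f := fun x v => f (x, v)) hP (hf x v) hfx
    have hcancel : ∀ S : ℝ, S / f (x, v) ^ 2 / (P x / f (x, v)) * f (x, v) = S / P x :=
      fun S => by field_simp
    simp only [hproj, nsq, hgrad, div_pow, ← Finset.sum_div, hcancel]
  simp only [IPiXX, hdensity]
  exact intMu_eq_integral
    (F := fun x v =>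
      (∑ i, (P' x (Pi.single i 1) - P x * f' (x, v) (Pi.single i 1) / f (x, v)) ^ 2) / P x)
    (integrable_sum_sq_sub_div _ (fun i => evalAt f' (Pi.single i 1))
      (fun i => (evalAt P' (Pi.single i 1)).compContinuous .fst) (P := P.compContinuous .fst)
      hc hcf fun p => hcP p.1)

lemma collision_dissipation_eq_integral (hc : 0 < c) (hcf : ∀ p, c ≤ f p)
    (hf : ∀ x v, HasFDerivAt (fun y => f (y, v)) (f' (x, v)) x) (lam : ℝ) :
    -lam * IPiXX d (fun x v => f (x, v))
        - lam * (IX d (fun x v => f (x, v)) - IPiX d (fun x v => f (x, v)))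
      = ∫ p, ((∑ i, 2 * f' p (Pi.single i 1) * (lam *
            (marginal (gaussMeasure d) f' p.1 (Pi.single i 1) - f' p (Pi.single i 1)))) / f p
          - (∑ i, f' p (Pi.single i 1) ^ 2) * (lam * (marginal (gaussMeasure d) f p.1 - f p))
            / f p ^ 2) ∂phaseMeasure d := by
  rw [IX_eq_integral hc hcf hf, IPiX_eq_integral hf, IPiXX_eq_integral hc hcf hf]
  exact (integral_sum_sq_div_relaxation _ (fun i => evalAt f' (Pi.single i 1))
    (fun i => (evalAt (marginal (gaussMeasure d) f') (Pi.single i 1)).compContinuous .fst)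
    (P := (marginal (gaussMeasure d) f).compContinuous .fst)
    hc hcf (fun p => le_marginal _ hcf p.1) lam).symm

end Static

/-! ### Evolution under the relaxation equation -/

section Relaxation

variable {E X V G : Type*} [NormedAddCommGroup E] [NormedSpace ℝ E] [NormedAddCommGroup X]
  [NormedSpace ℝ X] [NormedAddCommGroup V] [NormedSpace ℝ V] [NormedAddCommGroup G]
  [NormedSpace ℝ G]

/-- The inclusion of the position directions into `(time, position, velocity)`. -/
def spaceIncl (X V : Type*) [NormedAddCommGroup X] [NormedSpace ℝ X] [NormedAddCommGroup V]
    [NormedSpace ℝ V] : X →L[ℝ] ℝ × X × V :=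
  .inr ℝ ℝ (X × V) ∘L .inl ℝ X V

lemma hasFDerivAt_space {F : ℝ × X × V → G} {L : (ℝ × X × V) →L[ℝ] G} {t : ℝ} {x : X} {v : V}
    (hF : HasFDerivAt F L (t, x, v)) :
    HasFDerivAt (fun y => F (t, y, v)) (L ∘L spaceIncl X V) x :=
  hF.comp x ((hasFDerivAt_prodMk_right t (x, v)).comp x (hasFDerivAt_prodMk_left x v))

lemma hasDerivAt_time {F : ℝ × E → G} {L : (ℝ × E) →L[ℝ] G} {t : ℝ} {p : E}
    (hF : HasFDerivAt F L (t, p)) : HasDerivAt (fun s => F (s, p)) (L (1, 0)) t :=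
  hF.comp_hasDerivAt t ((hasDerivAt_id t).prodMk (hasDerivAt_const t p))

/-- The restriction to position directions, at time `t`, of a field of linear maps; for the
derivative of a function `H` this is the spatial derivative of `atTime t H`. -/
def spatialPart (t : ℝ) (H' : ℝ × X × V →ᵇ (ℝ × X × V) →L[ℝ] G) : X × V →ᵇ X →L[ℝ] G :=
  ((ContinuousLinearMap.compL ℝ _ _ G).flip (spaceIncl X V)).compLeftContinuousBounded _
    (atTime t H')

lemma spatialPart_apply (t : ℝ) (H' : ℝ × X × V →ᵇ (ℝ × X × V) →L[ℝ] G) (p : X × V) (ξ : X) :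
    spatialPart t H' p ξ = H' (t, p) (spaceIncl X V ξ) := rfl

lemma hasFDerivAt_atTime {H : ℝ × X × V →ᵇ G} {H' : ℝ × X × V →ᵇ (ℝ × X × V) →L[ℝ] G}
    (hH : ∀ q, HasFDerivAt H (H' q) q) (t : ℝ) (x : X) (v : V) :
    HasFDerivAt (fun y => atTime t H (y, v)) (spatialPart t H' (x, v)) x :=
  hasFDerivAt_space (hH (t, x, v))

lemma fderiv_time_space_of_relaxation [MeasurableSpace V] [OpensMeasurableSpace V]
    [SecondCountableTopology V] (ν : Measure V) [IsFiniteMeasure ν] {H : ℝ × X × V →ᵇ ℝ}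
    {H' : ℝ × X × V →ᵇ (ℝ × X × V) →L[ℝ] ℝ}
    {H'' : ℝ × X × V →ᵇ (ℝ × X × V) →L[ℝ] (ℝ × X × V) →L[ℝ] ℝ}
    (hH : ∀ q, HasFDerivAt H (H' q) q) (hH' : ∀ q, HasFDerivAt H' (H'' q) q) {lam t : ℝ}
    (heq : ∀ p, H' (t, p) (1, 0) = lam * (marginal ν (atTime t H) p.1 - H (t, p)))
    (p : X × V) (ξ : X) :
    H'' (t, p) (1, 0) (spaceIncl X V ξ)
      = lam * (marginal ν (spatialPart t H') p.1 ξ - spatialPart t H' p ξ) := by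
  obtain ⟨x, v⟩ := p
  have htime : HasFDerivAt (fun y => H' (t, y, v) (1, 0))
      (.apply ℝ ℝ (1, 0) ∘L H'' (t, x, v) ∘L spaceIncl X V) x :=
    (ContinuousLinearMap.apply ℝ ℝ ((1, 0) : ℝ × X × V)).hasFDerivAt.comp x
      (hasFDerivAt_space (hH' (t, x, v)))
  have hrelax : HasFDerivAt (fun y => lam * (marginal ν (atTime t H) y - H (t, y, v)))
      (lam • (marginal ν (spatialPart t H') x - spatialPart t H' (x, v))) x :=
    ((hasFDerivAt_marginal ν (hasFDerivAt_atTime hH t) x).sub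
      (hasFDerivAt_atTime hH t x v)).const_mul lam
  calc H'' (t, x, v) (1, 0) (spaceIncl X V ξ)
      = H'' (t, x, v) (spaceIncl X V ξ) (1, 0) := second_derivative_symmetric hH (hH' _) _ _
    _ = lam * (marginal ν (spatialPart t H') x ξ - spatialPart t H' (x, v) ξ) :=
      DFunLike.congr_fun
        (htime.unique (hrelax.congr_of_eventuallyEq (.of_forall fun y => heq (y, v)))) ξ

lemma hasDerivAt_IX_of_relaxation {d : ℕ} {H : ℝ × Phase d →ᵇ ℝ}
    {H' : ℝ × Phase d →ᵇ (ℝ × Phase d) →L[ℝ] ℝ}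
    {H'' : ℝ × Phase d →ᵇ (ℝ × Phase d) →L[ℝ] (ℝ × Phase d) →L[ℝ] ℝ}
    (hH : ∀ q, HasFDerivAt H (H' q) q) (hH' : ∀ q, HasFDerivAt H' (H'' q) q)
    {c lam t : ℝ} (hc : 0 < c) (hcH : ∀ q, c ≤ H q)
    (heq : ∀ p, H' (t, p) (1, 0)
      = lam * (marginal (gaussMeasure d) (atTime t H) p.1 - H (t, p))) :
    HasDerivAt (fun s => IX d fun x v => H (s, x, v))
      (-lam * IPiXX d (fun x v => H (t, x, v))
        - lam * (IX d (fun x v => H (t, x, v)) - IPiX d fun x v => H (t, x, v))) t := by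
  let e (i : Fin d) : ℝ × Phase d := spaceIncl _ _ (Pi.single i 1)
  have hgrad : ∀ i s p,
      HasDerivAt (fun s => H' (s, p) (e i)) (H'' (s, p) (1, 0) (e i)) s := fun i s p =>
    (ContinuousLinearMap.apply ℝ ℝ (e i)).hasFDerivAt.comp_hasDerivAt s
      (hasDerivAt_time (hH' (s, p)))
  have hderiv := hasDerivAt_integral_sum_sq_div (phaseMeasure d) hc hcH
    (g := fun i => evalAt H' (e i)) (g' := fun i => evalAt (evalAt H'' (1, 0)) (e i))
    (f' := evalAt H' (1, 0)) hgrad (fun s p => hasDerivAt_time (hH (s, p))) t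
  have hIX := fun s => IX_eq_integral hc (fun p => hcH (s, p)) (hasFDerivAt_atTime hH s)
  have hdiss := collision_dissipation_eq_integral hc (fun p => hcH (t, p))
    (hasFDerivAt_atTime hH t) lam
  simp only [spatialPart_apply, atTime_apply] at hIX hdiss
  rw [hdiss, funext hIX]
  refine hderiv.congr_deriv ?_
  simp only [evalAt_apply, heq, e, spatialPart_apply,
    fderiv_time_space_of_relaxation _ hH hH' heq]

end Relaxation

theorem spatial_fisher_collision_general (d : ℕ) (lam : ℝ)
    (h : ℝ → (Fin d → ℝ) → (Fin d → ℝ) → ℝ)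
    (hsmooth : ContDiff ℝ 2 fun q : ℝ × Phase d => h q.1 q.2.1 q.2.2)
    (hpos : ∃ c : ℝ, 0 < c ∧ ∀ t x v, c ≤ h t x v)
    (hbdd : ∀ n ≤ 2, ∃ C : ℝ, ∀ q,
      ‖iteratedFDeriv ℝ n (fun r : ℝ × Phase d => h r.1 r.2.1 r.2.2) q‖ ≤ C)
    (t : ℝ) (hpde : ∀ x v, deriv (fun s => h s x v) t = lam * (proj d (h t) x - h t x v)) :
    HasDerivAt (fun s => IX d (h s))
      (-lam * IPiXX d (h t) - lam * (IX d (h t) - IPiX d (h t))) t := by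
  obtain ⟨c, hc, hch⟩ := hpos
  obtain ⟨H, H', H'', hHh, hH, hH'⟩ := exists_boundedContinuous_fderiv_fderiv hsmooth hbdd
  obtain rfl : h = fun s x v => H (s, x, v) := by rw [hHh]
  refine hasDerivAt_IX_of_relaxation hH hH' hc (fun q => hch q.1 q.2.1 q.2.2) fun p => ?_
  rw [← (hasDerivAt_time (hH (t, p))).deriv, ← proj_eq_marginal]
  exact hpde p.1 p.2

/-- Evolution of the spatial Fisher information under the relaxation collision
operator: `(d/dt) I^X(h_t) ≤ -λ I^{ΠX/X}(h_t) - λ (I^X(h_t) - I^{ΠX}(h_t))`. -/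
theorem spatial_fisher_collision
    (d : ℕ) (hd : 1 ≤ d) (lam : ℝ) (hlam : 0 < lam)
    (h : ℝ → (Fin d → ℝ) → (Fin d → ℝ) → ℝ)
    (hreg : Regular d h)
    (hpde : SolvesCollision d lam h) :
    ∀ t : ℝ, 0 ≤ t →
      ∃ c : ℝ, HasDerivAt (fun s => IX d (h s)) c t ∧
        c ≤ -lam * IPiXX d (h t) - lam * (IX d (h t) - IPiX d (h t)) := by
  intro t ht
  obtain ⟨hsmooth, -, ⟨c, C, hc, hcC⟩, hbdd⟩ := hreg
  exact ⟨_, spatial_fisher_collision_general d lam h (hsmooth.of_le (by norm_cast))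
    ⟨c, hc, fun t x v => (hcC t x v).1⟩ (fun n _ => hbdd n) t fun x v => hpde t x v ht, le_rfl⟩
end
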